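/- For every s ∈ ℂ with Re(s) > 0, lim_{ℓ→0⁺} ( −(2/ℓ)·Σ_{n=1}^∞ (−e^{−sℓ})^n/n² − π²/(6ℓ) ) = −2s·log 2. -/

import Mathlib

open Filter

/-!
The bracket equals `-2` times the difference quotient at `0` of `ℓ ↦ Li₂(-e^{-sℓ})`, because
`Li₂(-1) = -π²/12`. Inside the unit disc the derivative of `Li₂` is `-log (1 - z) / z`. Both `Li₂`
and this formula extend continuously to the unit circle away from `1`, so the formula still gives
the derivative of `Li₂` within the closed disc at boundary points. At `-1` its value is `log 2`, and
the chain rule gives the limit `-2 s log 2`.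
-/

open Topology

theorem hasDerivWithinAt_closure_of_tendsto_deriv {E : Type*} [NormedAddCommGroup E]
    [NormedSpace ℂ E] {f : ℂ → E} {U : Set ℂ} {z : ℂ} {f' : E} (hdiff : DifferentiableOn ℂ f U)
    (hconv : Convex ℝ U) (hopen : IsOpen U) (hcont : ContinuousOn f (closure U))
    (hlim : Tendsto (deriv f) (𝓝[U] z) (𝓝 f')) :
    HasDerivWithinAt f f' (closure U) z := by
  let realLinear : E →L[ℝ] ℂ →L[ℝ] E :=
    (ContinuousLinearMap.restrictScalarsL ℂ ℂ E ℝ ℝ).comp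
      ((ContinuousLinearMap.toSpanSingletonCLE (𝕜 := ℂ) (E := E) :
        E →L[ℂ] ℂ →L[ℂ] E).restrictScalars ℝ)
  have fderiv_eq : ∀ w ∈ U, realLinear (deriv f w) = fderiv ℝ f w := fun w hw =>
    ((hdiff.differentiableAt (hopen.mem_nhds hw)).hasDerivAt.hasFDerivAt.restrictScalars
      ℝ).fderiv.symm
  have fderiv_tendsto : Tendsto (fderiv ℝ f) (𝓝[U] z) (𝓝 (realLinear f')) :=
    ((realLinear.continuous.tendsto f').comp hlim).congr'
      (eventually_nhdsWithin_of_forall fderiv_eq)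
  exact (hasFDerivWithinAt_closure_of_tendsto_fderiv (hdiff.restrictScalars ℝ) hconv hopen
    (fun w hw => (hcont w hw).mono subset_closure) fderiv_tendsto).of_restrictScalars ℝ rfl

theorem one_sub_mem_slitPlane_of_norm_le_one {z : ℂ} (hz : ‖z‖ ≤ 1) (hz1 : z ≠ 1) :
    1 - z ∈ Complex.slitPlane := by
  rw [Complex.mem_slitPlane_iff]
  by_contra! h
  obtain ⟨hre, him⟩ := h
  rw [Complex.sub_re, Complex.one_re, sub_nonpos] at hre
  rw [Complex.sub_im, Complex.one_im, zero_sub, neg_eq_zero] at him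
  exact hz1 (Complex.ext (((Complex.re_le_norm z).trans hz).antisymm hre) him)

theorem norm_natCast_add_one (n : ℕ) : ‖(n : ℂ) + 1‖ = n + 1 := by
  exact_mod_cast Complex.norm_natCast (n + 1)

theorem tsum_pow_div_add_one {z : ℂ} (hz : ‖z‖ < 1) (hz0 : z ≠ 0) :
    ∑' n : ℕ, z ^ n / ((n : ℂ) + 1) = -Complex.log (1 - z) / z := by
  rw [eq_div_iff hz0, ← (Complex.hasSum_taylorSeries_neg_log' hz).tsum_eq, ← tsum_mul_right]
  exact tsum_congr fun n => by ring

/-- The dilogarithm `Li₂ z = ∑_{n ≥ 1} zⁿ / n²`, given by its power series with the index shifted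
by one. It is meaningful on the closed unit disc, where the series converges absolutely; elsewhere
the sum takes the junk value `0`. -/
noncomputable def dilog (z : ℂ) : ℂ :=
  ∑' n : ℕ, z ^ (n + 1) / ((n : ℂ) + 1) ^ 2

theorem dilog_neg_one : dilog (-1) = -((Real.pi : ℂ) ^ 2 / 12) := by
  have bernoulli_two_eval_half :
      ((Polynomial.bernoulli 2).map (algebraMap ℚ ℝ)).eval (1 / 2) = -(1 / 12) := by
    norm_num [Polynomial.bernoulli_def, Finset.sum_range_succ]
  have alternating_sum :
      HasSum (fun n : ℕ => (-1 : ℝ) ^ n / (n : ℝ) ^ 2) (-(Real.pi ^ 2 / 12)) := by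
    convert! hasSum_one_div_nat_pow_mul_cos one_ne_zero (x := 1 / 2) (by norm_num) using 1
    · ext n
      rw [show 2 * Real.pi * n * (1 / 2) = n * Real.pi by ring, Real.cos_nat_mul_pi]
      ring
    · rw [mul_one, bernoulli_two_eval_half, Nat.factorial_two]
      push_cast
      ring
  have shifted_sum := Complex.hasSum_ofReal.mpr ((hasSum_nat_add_iff' 1).mpr alternating_sum)
  simpa [dilog] using shifted_sum.tsum_eq

theorem continuousOn_dilog_closedBall : ContinuousOn dilog (Metric.closedBall 0 1) := by
  have summable_inv_sq : Summable fun n : ℕ => 1 / ((n : ℝ) + 1) ^ 2 := by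
    simpa using (summable_nat_add_iff 1).mpr hasSum_zeta_two.summable
  refine continuousOn_tsum (fun n => by fun_prop) summable_inv_sq fun n z hz => ?_
  rw [norm_div, norm_pow, norm_pow, norm_natCast_add_one]
  gcongr
  exact pow_le_one₀ (norm_nonneg z) (mem_closedBall_zero_iff.mp hz)

theorem hasDerivAt_dilog_tsum {z : ℂ} (hz : ‖z‖ < 1) :
    HasDerivAt dilog (∑' n : ℕ, z ^ n / ((n : ℂ) + 1)) z := by
  obtain ⟨r, hzr, hr1⟩ := exists_between hz
  have hr0 : 0 < r := (norm_nonneg z).trans_lt hzr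
  have term_hasDerivAt (n : ℕ) (w : ℂ) :
      HasDerivAt (fun w : ℂ => w ^ (n + 1) / ((n : ℂ) + 1) ^ 2) (w ^ n / ((n : ℂ) + 1)) w := by
    have hn : (n : ℂ) + 1 ≠ 0 := Nat.cast_add_one_ne_zero n
    refine ((hasDerivAt_pow (n + 1) w).div_const (((n : ℂ) + 1) ^ 2)).congr_deriv ?_
    rw [Nat.add_sub_cancel]
    push_cast
    field_simp
  have term_deriv_norm_le (n : ℕ) (w : ℂ) (hw : w ∈ Metric.ball 0 r) :
      ‖w ^ n / ((n : ℂ) + 1)‖ ≤ r ^ n := by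
    rw [norm_div, norm_pow, norm_natCast_add_one]
    calc ‖w‖ ^ n / ((n : ℝ) + 1) ≤ ‖w‖ ^ n := div_le_self (by positivity) (by simp)
      _ ≤ r ^ n := by gcongr; exact (mem_ball_zero_iff.mp hw).le
  have summable_at_zero : Summable fun n : ℕ => (0 : ℂ) ^ (n + 1) / ((n : ℂ) + 1) ^ 2 := by
    simp [summable_zero]
  exact hasDerivAt_tsum_of_isPreconnected (summable_geometric_of_lt_one hr0.le hr1)
    Metric.isOpen_ball (convex_ball (0 : ℂ) r).isPreconnected (fun n w _ => term_hasDerivAt n w)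
    term_deriv_norm_le (Metric.mem_ball_self hr0) summable_at_zero (mem_ball_zero_iff.mpr hzr)

theorem hasDerivAt_dilog {z : ℂ} (hz : ‖z‖ < 1) (hz0 : z ≠ 0) :
    HasDerivAt dilog (-Complex.log (1 - z) / z) z :=
  tsum_pow_div_add_one hz hz0 ▸ hasDerivAt_dilog_tsum hz

theorem hasDerivWithinAt_dilog_closedBall {z : ℂ} (hz : ‖z‖ ≤ 1) (hz0 : z ≠ 0) (hz1 : z ≠ 1) :
    HasDerivWithinAt dilog (-Complex.log (1 - z) / z) (Metric.closedBall 0 1) z := by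
  have formula_continuousAt : ContinuousAt (fun w : ℂ => -Complex.log (1 - w) / w) z :=
    ((continuousAt_const.sub continuousAt_id).clog
      (one_sub_mem_slitPlane_of_norm_le_one hz hz1)).neg.div continuousAt_id hz0
  have deriv_eq : ∀ᶠ w in 𝓝[Metric.ball 0 1] z, -Complex.log (1 - w) / w = deriv dilog w := by
    filter_upwards [self_mem_nhdsWithin, mem_nhdsWithin_of_mem_nhds (isOpen_ne.mem_nhds hz0)]
      with w hw hw0
    exact (hasDerivAt_dilog (mem_ball_zero_iff.mp hw) hw0).deriv.symm
  rw [← closure_ball (0 : ℂ) one_ne_zero]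
  refine hasDerivWithinAt_closure_of_tendsto_deriv
    (fun w hw => ?_) (convex_ball 0 1) Metric.isOpen_ball ?_ ?_
  · have hw1 : ‖w‖ < 1 := mem_ball_zero_iff.mp hw
    exact (hasDerivAt_dilog_tsum hw1).differentiableAt.differentiableWithinAt
  · rw [closure_ball (0 : ℂ) one_ne_zero]
    exact continuousOn_dilog_closedBall
  · exact (formula_continuousAt.mono_left nhdsWithin_le_nhds).congr' deriv_eq

theorem hasDerivWithinAt_dilog_neg_exp_zero {s : ℂ} (hs : 0 ≤ s.re) :
    HasDerivWithinAt (fun ℓ : ℝ => dilog (-Complex.exp (-s * ℓ))) (s * (Real.log 2 : ℂ))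
      (Set.Ici 0) 0 := by
  have inner_hasDerivAt : HasDerivAt (fun ℓ : ℝ => -Complex.exp (-s * ℓ)) s 0 := by
    simpa using ((Complex.ofRealCLM.hasDerivAt (x := 0)).const_mul (-s)).cexp.fun_neg
  have inner_mapsTo : Set.MapsTo (fun ℓ : ℝ => -Complex.exp (-s * ℓ)) (Set.Ici 0)
      (Metric.closedBall 0 1) := fun ℓ hℓ => by
    simpa [Complex.norm_exp] using mul_nonneg hs hℓ
  have outer_hasDerivWithinAt :
      HasDerivWithinAt dilog (Real.log 2 : ℂ) (Metric.closedBall 0 1) (-1) := by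
    convert! hasDerivWithinAt_dilog_closedBall (z := -1) (by simp) (by simp) (by norm_num) using 1
    rw [Complex.ofReal_log zero_le_two]
    norm_num
  rw [mul_comm]
  exact HasDerivWithinAt.comp_of_eq 0 outer_hasDerivWithinAt inner_hasDerivAt.hasDerivWithinAt
    inner_mapsTo (by simp)

theorem stmt_16_general (s : ℂ) (hs : 0 ≤ s.re) :
    Tendsto (fun ℓ : ℝ => -(2 / (ℓ : ℂ)) * dilog (-Complex.exp (-s * ℓ)) -
        ((Real.pi ^ 2 / (6 * ℓ) : ℝ) : ℂ))
      (𝓝[>] 0) (𝓝 (-2 * s * (Real.log 2 : ℂ))) := by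
  have slope_tendsto := (hasDerivWithinAt_iff_tendsto_slope' Set.self_notMem_Ioi).mp
    (hasDerivWithinAt_dilog_neg_exp_zero hs).Ioi_of_Ici
  rw [mul_assoc]
  refine (slope_tendsto.const_mul (-2)).congr' ?_
  filter_upwards [self_mem_nhdsWithin] with ℓ (hℓ : 0 < ℓ)
  have hℓ0 : (ℓ : ℂ) ≠ 0 := Complex.ofReal_ne_zero.mpr hℓ.ne'
  simp only [slope_def_module, Complex.ofReal_zero, mul_zero, Complex.exp_zero, dilog_neg_one,
    sub_zero, Complex.real_smul]
  push_cast
  field_simp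
  ring

/-- The dilogarithm term in the pinching asymptotics: for `Re s > 0`,
`lim_{ℓ→0⁺} ( −(2/ℓ)·Σ_{n≥1} (−e^{−sℓ})ⁿ/n² − π²/(6ℓ) ) = −2s·log 2`. -/
theorem stmt_16 (s : ℂ) (hs : 0 < s.re) :
    Tendsto (fun ℓ : ℝ =>
        -(2 / (ℓ : ℂ)) * ∑' n : ℕ,
            (-(Complex.exp (-s * ℓ))) ^ (n + 1) / (((n : ℂ) + 1) ^ 2) -
          ((Real.pi ^ 2 / (6 * ℓ) : ℝ) : ℂ))
      (nhdsWithin 0 (Set.Ioi 0))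
      (nhds (-2 * s * (Real.log 2 : ℂ))) :=
  stmt_16_general s hs.le
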